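/- For every odd prime number p, every finite p-group that is an E-group and has order at most p^7 is abelian. -/

import Mathlib

/-- A group is an `E`-group if every element commutes with all of its
endomorphic images. -/
def IsEGroup (G : Type*) [Group G] : Prop :=
  ∀ (φ : G →* G) (x : G), x * φ x = φ x * x

/-! Conjugates of `x` are endomorphic images of `x`, so an `E`-group is 2-Engel; hence
`⁅x, ⁅y, z⁆⁆ ^ 3 = 1`, and a noncentral commutator can occur only for `p = 3`, where it forces
`3 ^ 9 ≤ |G|`. We may thus suppose that `G` has class two.

Let `q` be the exponent of `G / G'`. Since `G / G'` has a cyclic quotient of order `q`, every `u`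
with `u ^ q = 1` is an endomorphic image that generates the range of its endomorphism, and such an
image is central. Hence `x ↦ x ^ q`, an endomorphism because `p` is odd, has central kernel and
range in `G'`. If `G` is not abelian, then `G / Z(G)` is not generated by two elements, and counting
with `|G| ≤ p ^ 7` leaves only the case where `G / Z(G)` and `G'` are elementary abelian of order
`p ^ 3` and `q = p`.

Identify both with `𝔽_p ^ 3`, so that the commutator becomes the cross product and the `p`-th power
an invertible matrix `M`. An isometry `A` of the bilinear form `M` with determinant one satisfies
`M * A = A.adjugateᵀ * M`, where `A.adjugateᵀ` is the action of `A` on cross products, so `A` lifts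
to an endomorphism of `G`. If `A` is not scalar, this endomorphism moves some `x` to an element not
commuting with `x`. For `M` symmetric take for `A` a half-turn about a nonisotropic vector, and
otherwise `A = M⁻¹ * Mᵀ`. -/

open scoped commutatorElement

section UnipotentRepresentation

variable {R : Type*} [Ring R]

theorem mul_eq_neg_mul_of_sq_eq_zero {X Y : R} (hX : X * X = 0) (hY : Y * Y = 0)
    (hXY : (X + Y + X * Y) * (X + Y + X * Y) = 0) : X * Y = -(Y * X) := by
  have hsum : X * Y + Y * X + Y * X * Y + X * Y * X + X * Y * X * Y = 0 := by
    linear_combination (norm := noncomm_ring) hXY - hX - hY - hX * Y - X * hY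
  have hXYXY : X * Y * X * Y = 0 := by
    linear_combination (norm := noncomm_ring)
      X * hsum * Y - hX * (Y * Y + Y * X * Y + Y * X * Y * Y) - X * Y * X * hY
  have hXYX : X * Y * X = 0 := by
    linear_combination (norm := noncomm_ring)
      X * hsum - hX * (Y + Y * X + Y * X * Y) - hXYXY
  have hYXY : Y * X * Y = 0 := by
    linear_combination (norm := noncomm_ring)
      Y * hsum - hY * (X + X * Y) - Y * hXYX - Y * hXYX * Y
  linear_combination (norm := noncomm_ring) hsum - hYXY - hXYX - hXYXY

variable {G : Type*} [Group G] {ρ : G →* R}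

theorem map_sub_one_mul_map_sub_one (hρ : ∀ g, (ρ g - 1) * (ρ g - 1) = 0) (x y : G) :
    (ρ x - 1) * (ρ y - 1) = -((ρ y - 1) * (ρ x - 1)) := by
  refine mul_eq_neg_mul_of_sq_eq_zero (hρ x) (hρ y) ?_
  have hxy := hρ (x * y)
  rw [map_mul] at hxy
  linear_combination (norm := noncomm_ring) hxy

theorem map_inv_sub_one (hρ : ∀ g, (ρ g - 1) * (ρ g - 1) = 0) (x : G) :
    ρ x⁻¹ - 1 = -(ρ x - 1) := by
  have hinv : ρ x * ρ x⁻¹ = 1 := by rw [← map_mul, mul_inv_cancel, map_one]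
  linear_combination (norm := noncomm_ring) hρ x * ρ x⁻¹ - ρ x * hinv + hinv + hinv

theorem map_commutatorElement_sub_one (hρ : ∀ g, (ρ g - 1) * (ρ g - 1) = 0) (x y : G) :
    ρ ⁅x, y⁆ - 1 = 2 * ((ρ x - 1) * (ρ y - 1)) := by
  have hanti := map_sub_one_mul_map_sub_one hρ x y
  have hx := hρ x
  have hy := hρ y
  rw [commutatorElement_def, map_mul, map_mul, map_mul,
    eq_add_of_sub_eq (map_inv_sub_one hρ x), eq_add_of_sub_eq (map_inv_sub_one hρ y)]
  obtain ⟨X, hX⟩ : ∃ X, ρ x = X + 1 := ⟨ρ x - 1, by abel⟩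
  obtain ⟨Y, hY⟩ : ∃ Y, ρ y = Y + 1 := ⟨ρ y - 1, by abel⟩
  simp only [hX, hY, add_sub_cancel_right] at hanti hx hy ⊢
  linear_combination (norm := noncomm_ring)
    Y * hanti - X * hanti + X * hanti * Y - hanti - hx + hx * Y + hx * Y - hx * Y * Y
      - hy - hy * X - X * hy

end UnipotentRepresentation

section ConjugationAction

variable {G : Type*} [Group G] (A : Subgroup G) [A.Normal] [IsMulCommutative A]

open scoped IsMulCommutative

/-- The action of `G` by conjugation on an abelian normal subgroup `A`, as a homomorphism into the
(multiplicative monoid of the) endomorphism ring of `A` written additively. -/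
def conjAddEnd : G →* AddMonoid.End (Additive A) where
  toFun g := (MulAut.conjNormal g : A ≃* A).toMonoidHom.toAdditive
  map_one' := by rw [map_one]; rfl
  map_mul' g h := by rw [map_mul]; rfl

variable {A}

theorem coe_conjAddEnd_sub_one_apply (g : G) (a : A) :
    (((conjAddEnd A g - 1) (.ofMul a)).toMul : G) = ⁅g, (a : G)⁆ :=
  div_eq_mul_inv _ _

theorem coe_conjAddEnd_sub_one_mul_apply (g h : G) (a : A) :
    ((((conjAddEnd A g - 1) * (conjAddEnd A h - 1)) (.ofMul a)).toMul : G) = ⁅g, ⁅h, (a : G)⁆⁆ := by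
  rw [← coe_conjAddEnd_sub_one_apply h, ← coe_conjAddEnd_sub_one_apply]
  rfl

variable (hA : ∀ (g : G) (a : A), ⁅g, ⁅g, (a : G)⁆⁆ = 1)
include hA

theorem conjAddEnd_sub_one_mul_self (g : G) :
    (conjAddEnd A g - 1) * (conjAddEnd A g - 1) = 0 := by
  ext a
  exact (coe_conjAddEnd_sub_one_mul_apply g g a.toMul).trans (hA g a.toMul)

theorem commutatorElement_commutatorElement_swap_of_isMulCommutative (x y : G) (a : A) :
    ⁅x, ⁅y, (a : G)⁆⁆ = ⁅y, ⁅x, (a : G)⁆⁆⁻¹ := by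
  rw [← coe_conjAddEnd_sub_one_mul_apply, ← coe_conjAddEnd_sub_one_mul_apply,
    map_sub_one_mul_map_sub_one (conjAddEnd_sub_one_mul_self hA) x y]
  rfl

theorem commutatorElement_commutatorElement_eq_sq_of_isMulCommutative (x y : G) (a : A) :
    ⁅⁅x, y⁆, (a : G)⁆ = ⁅x, ⁅y, (a : G)⁆⁆ ^ 2 := by
  rw [← coe_conjAddEnd_sub_one_mul_apply, ← coe_conjAddEnd_sub_one_apply,
    map_commutatorElement_sub_one (conjAddEnd_sub_one_mul_self hA) x y, two_mul, pow_two]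
  rfl

end ConjugationAction

/-- The 2-Engel condition, in the form that every element commutes with its conjugates. -/
def IsTwoEngel (G : Type*) [Group G] : Prop :=
  ∀ x g : G, Commute x (g * x * g⁻¹)

theorem IsEGroup.isTwoEngel {G : Type*} [Group G] (hG : IsEGroup G) : IsTwoEngel G :=
  fun x g ↦ hG (MulAut.conj g).toMonoidHom x

namespace IsTwoEngel

variable {G : Type*} [Group G] (hG : IsTwoEngel G)
include hG

theorem commute_commutatorElement_left (x y : G) : Commute x ⁅x, y⁆ := by
  have h : Commute x (y * x⁻¹ * y⁻¹) := by simpa only [conj_inv] using (hG x y).inv_right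
  simpa only [commutatorElement_def, mul_assoc] using (Commute.refl x).mul_right h

theorem commute_commutatorElement_right (x y : G) : Commute y ⁅x, y⁆ := by
  rw [← commutatorElement_inv]
  exact (hG.commute_commutatorElement_left y x).inv_right

theorem commutatorElement_inv_right (x y : G) : ⁅x, y⁻¹⁆ = ⁅x, y⁆⁻¹ := by
  rw [_root_.commutatorElement_inv_right, mul_assoc,
    ← (hG.commute_commutatorElement_left y x).eq, inv_mul_cancel_left, commutatorElement_inv]

theorem isMulCommutative_normalClosure_singleton (a : G) :
    IsMulCommutative (Subgroup.normalClosure {a}) := by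
  refine Subgroup.isMulCommutative_closure ?_
  simp only [Group.mem_conjugatesOfSet_iff, Set.mem_singleton_iff, exists_eq_left, isConj_iff]
  rintro _ ⟨g, rfl⟩ _ ⟨h, rfl⟩
  simpa [mul_assoc] using (hG (g * a * g⁻¹) (h * g⁻¹)).eq

theorem commutatorElement_commutatorElement_swap (x y a : G) : ⁅x, ⁅y, a⁆⁆ = ⁅y, ⁅x, a⁆⁆⁻¹ := by
  have := hG.isMulCommutative_normalClosure_singleton a
  exact commutatorElement_commutatorElement_swap_of_isMulCommutative
    (fun g b ↦ (hG.commute_commutatorElement_left g b).commutator_eq) x y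
    ⟨a, Subgroup.subset_normalClosure (Set.mem_singleton a)⟩

theorem commutatorElement_commutatorElement_eq_sq (x y a : G) : ⁅⁅x, y⁆, a⁆ = ⁅x, ⁅y, a⁆⁆ ^ 2 := by
  have := hG.isMulCommutative_normalClosure_singleton a
  exact commutatorElement_commutatorElement_eq_sq_of_isMulCommutative
    (fun g b ↦ (hG.commute_commutatorElement_left g b).commutator_eq) x y
    ⟨a, Subgroup.subset_normalClosure (Set.mem_singleton a)⟩

theorem commutatorElement_commutatorElement_pow_three (x y a : G) : ⁅x, ⁅y, a⁆⁆ ^ 3 = 1 := by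
  have h : ⁅x, ⁅y, a⁆⁆⁻¹ = ⁅x, ⁅y, a⁆⁆ ^ 2 :=
    calc ⁅x, ⁅y, a⁆⁆⁻¹ = ⁅x, ⁅a, y⁆⁆ := by
          rw [← hG.commutatorElement_inv_right, commutatorElement_inv]
      _ = ⁅a, ⁅x, y⁆⁆⁻¹ := hG.commutatorElement_commutatorElement_swap x a y
      _ = ⁅x, ⁅y, a⁆⁆ ^ 2 := by
          rw [commutatorElement_inv, hG.commutatorElement_commutatorElement_eq_sq]
  rw [pow_succ, ← h, inv_mul_cancel]

end IsTwoEngel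

section OmegaCentral

theorem exists_monoidHom_apply_eq_of_pow_exponent_eq_one {A H : Type*} [CommGroup A] [Finite A]
    [Group H] {u : H} (hu : u ^ Monoid.exponent A = 1) :
    ∃ (f : A →* H) (a : A), f a = u ∧ ∀ b, f b ∈ Subgroup.zpowers u := by
  obtain ⟨e⟩ := CommGroup.monoidHom_mulEquiv_of_hasEnoughRootsOfUnity A ℂ
  obtain ⟨c, hc⟩ := Monoid.exists_orderOf_eq_exponent (Monoid.ExponentExists.of_finite (G := A))
  obtain ⟨χ, rfl⟩ := e.surjective c
  rw [MulEquiv.orderOf_eq] at hc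
  have : Finite χ.range := Set.finite_range χ
  obtain ⟨r, hr⟩ := IsCyclic.exists_generator (α := χ.range)
  have hdvd : orderOf u ∣ orderOf r := by
    refine (orderOf_dvd_of_pow_eq_one hu).trans (hc ▸ orderOf_dvd_of_pow_eq_one ?_)
    ext b
    obtain ⟨k, hk⟩ := Subgroup.mem_zpowers_iff.1 (hr (χ.rangeRestrict b))
    have : χ.rangeRestrict b ^ orderOf r = 1 := by
      rw [← hk, ← zpow_natCast, zpow_comm, zpow_natCast, pow_orderOf_eq_one, one_zpow]
    simpa using congrArg (fun z : χ.range ↦ ((z : ℂˣ) : ℂ)) this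
  let f := monoidHomOfForallMemZpowers hr hdvd
  have hf : f r = u := monoidHomOfForallMemZpowers_apply_gen hr hdvd
  obtain ⟨a, ha⟩ := χ.rangeRestrict_surjective r
  refine ⟨f.comp χ.rangeRestrict, a, by rw [MonoidHom.comp_apply, ha, hf], fun b ↦ ?_⟩
  obtain ⟨k, hk⟩ := Subgroup.mem_zpowers_iff.1 (hr (χ.rangeRestrict b))
  exact ⟨k, by rw [MonoidHom.comp_apply, ← hk, map_zpow, hf]⟩

variable {G : Type*} [Group G]

theorem IsEGroup.map_mem_center (hG : IsEGroup G) (φ : G →* G) {g : G}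
    (hφ : ∀ x, φ x ∈ Subgroup.zpowers (φ g)) : φ g ∈ Subgroup.center G := by
  have hg : Commute g (φ g) := hG φ g
  have hker : ∀ n ∈ φ.ker, Commute n (φ g) := by
    intro n hn
    have h : Commute (g * n) (φ (g * n)) := hG φ (g * n)
    rw [map_mul, MonoidHom.mem_ker.1 hn, mul_one] at h
    simpa only [inv_mul_cancel_left] using hg.inv_left.mul_left h
  refine Subgroup.mem_center_iff.2 fun x ↦ ?_
  obtain ⟨k, hk⟩ := Subgroup.mem_zpowers_iff.1 (hφ x)
  have hx : g ^ (-k) * x ∈ φ.ker := by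
    rw [MonoidHom.mem_ker, map_mul, map_zpow, zpow_neg, hk, inv_mul_cancel]
  have hxg : Commute (g ^ k * (g ^ (-k) * x)) (φ g) := (hg.zpow_left k).mul_left (hker _ hx)
  rw [zpow_neg, mul_inv_cancel_left] at hxg
  exact hxg.eq

theorem IsEGroup.mem_center_of_pow_exponent_abelianization_eq_one [Finite G] (hG : IsEGroup G)
    {u : G} (hu : u ^ Monoid.exponent (Abelianization G) = 1) : u ∈ Subgroup.center G := by
  obtain ⟨f, a, rfl, hf⟩ := exists_monoidHom_apply_eq_of_pow_exponent_eq_one hu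
  obtain ⟨g, rfl⟩ := QuotientGroup.mk_surjective a
  exact hG.map_mem_center (f.comp Abelianization.of) fun x ↦ hf _

end OmegaCentral

section CardBounds

section MonoidHom

variable {A H : Type*} [Group A] [Finite A] [Group H] {f : A →* H} {K : Subgroup A} {L : Subgroup H}

theorem card_le_card_mul_card_of_ker_le_of_range_le [Finite L] (hK : f.ker ≤ K)
    (hL : f.range ≤ L) : Nat.card A ≤ Nat.card K * Nat.card L := by
  rw [← f.ker.card_mul_index, Subgroup.index_ker]
  exact Nat.mul_le_mul (Subgroup.card_le_of_le hK) (Subgroup.card_le_of_le hL)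

theorem ker_eq_and_range_eq_of_card_mul_card_le_card [Finite L] (hK : f.ker ≤ K)
    (hL : f.range ≤ L) (hcard : Nat.card K * Nat.card L ≤ Nat.card A) :
    f.ker = K ∧ f.range = L := by
  have : Finite f.range := .of_surjective _ f.rangeRestrict_surjective
  rw [← f.ker.card_mul_index, Subgroup.index_ker] at hcard
  have hker := Subgroup.card_le_of_le hK
  have hrange := Subgroup.card_le_of_le hL
  refine ⟨Subgroup.eq_of_le_of_card_ge hK ?_, Subgroup.eq_of_le_of_card_ge hL ?_⟩
  · exact Nat.le_of_mul_le_mul_right ((Nat.mul_le_mul_left _ hrange).trans hcard) Nat.card_pos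
  · exact Nat.le_of_mul_le_mul_left ((Nat.mul_le_mul_right _ hker).trans hcard) Nat.card_pos

theorem card_mul_card_le_card_of_le_ker_of_le_range (hK : K ≤ f.ker) (hL : L ≤ f.range) :
    Nat.card K * Nat.card L ≤ Nat.card A := by
  have : Finite f.range := .of_surjective _ f.rangeRestrict_surjective
  rw [← f.ker.card_mul_index, Subgroup.index_ker]
  exact Nat.mul_le_mul (Subgroup.card_le_of_le hK) (Subgroup.card_le_of_le hL)

theorem injective_and_range_eq_of_card_le (hL : L ≤ f.range)
    (hcard : Nat.card A ≤ Nat.card L) : Function.Injective f ∧ f.range = L := by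
  have : Finite f.range := .of_surjective _ f.rangeRestrict_surjective
  have hrange : L = f.range := Subgroup.eq_of_le_of_card_ge hL
    ((Nat.card_le_card_of_surjective _ f.rangeRestrict_surjective).trans hcard)
  have hbij := (Nat.bijective_iff_surjective_and_card f.rangeRestrict).2
    ⟨f.rangeRestrict_surjective, (hcard.trans_eq (hrange ▸ rfl)).antisymm
      (Nat.card_le_card_of_surjective _ f.rangeRestrict_surjective)⟩
  exact ⟨f.rangeRestrict_injective_iff.1 hbij.injective, hrange.symm⟩

end MonoidHom

variable {G : Type*} [Group G] [Finite G] {p : ℕ} [Fact p.Prime] (hG : IsPGroup p G)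
include hG

theorem mul_card_le_card_of_lt_of_isPGroup {H K : Subgroup G} (h : H < K) :
    p * Nat.card H ≤ Nat.card K := by
  obtain ⟨n, hn⟩ := (hG.to_subgroup K).index (H.subgroupOf K)
  have hn0 : n ≠ 0 := by
    rintro rfl
    exact h.not_ge (Subgroup.relIndex_eq_one.1 hn)
  rw [← Subgroup.relIndex_bot_left, ← Subgroup.relIndex_bot_left,
    ← Subgroup.relIndex_mul_relIndex ⊥ H K bot_le h.le, mul_comm]
  refine Nat.mul_le_mul_left _ ?_
  rw [Subgroup.relIndex, hn]
  exact Nat.le_self_pow hn0 p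

theorem sq_mul_orderOf_le_card_of_closure_pair_ne_top
    (h : ∀ a b : G, Subgroup.closure {a, b} ≠ ⊤) (a : G) : p ^ 2 * orderOf a ≤ Nat.card G := by
  have hle (b : G) : Subgroup.zpowers a ≤ Subgroup.closure {a, b} :=
    Subgroup.zpowers_le.2 (Subgroup.subset_closure (Set.mem_insert a _))
  obtain ⟨b, hb⟩ : ∃ b, b ∉ Subgroup.zpowers a := by
    by_contra! hall
    exact h a a (top_le_iff.1 fun b _ ↦ hle a (hall b))
  have hlt : Subgroup.zpowers a < Subgroup.closure {a, b} :=
    (hle b).lt_of_not_ge fun hge ↦ hb (hge (Subgroup.subset_closure (by simp)))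
  calc p ^ 2 * orderOf a = p * (p * Nat.card (Subgroup.zpowers a)) := by
        rw [Nat.card_zpowers, sq, mul_assoc]
    _ ≤ p * Nat.card (Subgroup.closure {a, b}) :=
        Nat.mul_le_mul_left p (mul_card_le_card_of_lt_of_isPGroup hG hlt)
    _ ≤ Nat.card (⊤ : Subgroup G) := mul_card_le_card_of_lt_of_isPGroup hG (h a b).lt_top
    _ = Nat.card G := Subgroup.card_top

theorem card_eq_pow_three_and_pow_eq_one_of_closure_pair_ne_top
    (h : ∀ a b : G, Subgroup.closure {a, b} ≠ ⊤) (hcard : Nat.card G ≤ p ^ 3) :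
    Nat.card G = p ^ 3 ∧ ∀ a : G, a ^ p = 1 := by
  have horder {a : G} (ha : a ≠ 1) : orderOf a = p := by
    refine le_antisymm ?_ (Nat.le_of_dvd (orderOf_pos a) (hG.dvd_orderOf ha))
    exact Nat.le_of_mul_le_mul_left
      ((sq_mul_orderOf_le_card_of_closure_pair_ne_top hG h a).trans hcard)
      (pow_pos (Fact.out : p.Prime).pos 2)
  obtain ⟨a, ha⟩ : ∃ a : G, a ≠ 1 := by
    by_contra! hall
    exact h 1 1 ((Subgroup.eq_top_iff' _).2 fun a ↦ by rw [hall a]; exact one_mem _)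
  refine ⟨hcard.antisymm ?_, fun b ↦ ?_⟩
  · simpa only [horder ha, ← pow_succ] using sq_mul_orderOf_le_card_of_closure_pair_ne_top hG h a
  · obtain rfl | hb := eq_or_ne b 1
    · exact one_pow p
    · exact orderOf_dvd_iff_pow_eq_one.1 (horder hb).dvd

theorem pow_card_mul_card_inf_centralizer_le {ι : Type*} (s : Finset ι) (x g : ι → G)
    {H : Subgroup G} (hx : ∀ i, x i ∈ H) (hxg : ∀ i j, Commute (x i) (g j) ↔ i ≠ j) :
    p ^ s.card * Nat.card (H ⊓ Subgroup.centralizer (g '' s) : Subgroup G) ≤ Nat.card H := by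
  classical
  induction s using Finset.induction_on with
  | empty => simpa using Subgroup.card_le_of_le inf_le_left
  | insert i s hi ih =>
    have hlt : H ⊓ Subgroup.centralizer (g '' (insert i s : Finset ι))
        < H ⊓ Subgroup.centralizer (g '' s) := by
      refine lt_of_le_not_ge ?_ fun hle ↦ ?_
      · exact inf_le_inf_left H (Subgroup.centralizer_le (Set.image_mono (by simp)))
      · have hxi : x i ∈ H ⊓ Subgroup.centralizer (g '' s) := by
          refine ⟨hx i, ?_⟩
          rintro _ ⟨j, hj, rfl⟩
          exact ((hxg i j).2 fun hij ↦ hi (hij ▸ hj)).eq.symm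
        have h := (hle hxi).2 (g i) ⟨i, Finset.mem_insert_self i s, rfl⟩
        exact (hxg i i).1 h.symm rfl
    rw [Finset.card_insert_of_notMem hi, pow_succ, mul_assoc]
    exact (Nat.mul_le_mul_left _ (mul_card_le_card_of_lt_of_isPGroup hG hlt)).trans ih

end CardBounds

theorem commutatorElement_pow_right_of_commute {G : Type*} [Group G] {x y : G}
    (h : Commute y ⁅x, y⁆) (n : ℕ) : ⁅x, y ^ n⁆ = ⁅x, y⁆ ^ n := by
  induction n with
  | zero => rw [pow_zero, pow_zero, commutatorElement_one_right]
  | succ n ih =>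
    rw [pow_succ, commutatorElement_mul_right_eq_mul_conj, ih, mul_assoc _ _ ⁅x, y⁆,
      (h.pow_left n).eq, ← mul_assoc, mul_inv_cancel_right, pow_succ]

namespace IsTwoEngel

variable {G : Type*} [Group G] (hG : IsTwoEngel G)
include hG

theorem isMulCommutative_commutator (hZ : ∀ x y z : G, ⁅x, ⁅y, z⁆⁆ ∈ Subgroup.center G) :
    IsMulCommutative (commutator G) := by
  rw [commutator_eq_closure]
  refine Subgroup.isMulCommutative_closure ?_
  rintro _ ⟨x, y, rfl⟩ _ ⟨z, w, rfl⟩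
  rw [← commutatorElement_eq_one_iff_mul_comm, hG.commutatorElement_commutatorElement_eq_sq,
    commutatorElement_eq_one_iff_mul_comm.2 (Subgroup.mem_center_iff.1 (hZ y z w) x), one_pow]

theorem commutatorElement_pow_three_mem_center (x y : G) : ⁅x, y⁆ ^ 3 ∈ Subgroup.center G := by
  refine Subgroup.mem_center_iff.2 fun g ↦ commutatorElement_eq_one_iff_mul_comm.1 ?_
  rw [commutatorElement_pow_right_of_commute (hG.commute_commutatorElement_right g _),
    hG.commutatorElement_commutatorElement_pow_three]

open scoped IsMulCommutative in
theorem pow_three_mem_center_of_mem_commutator [IsMulCommutative (commutator G)] {c : G}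
    (hc : c ∈ commutator G) : c ^ 3 ∈ Subgroup.center G := by
  have h : commutator G ≤ ((Subgroup.center G).comap
      ((commutator G).subtype.comp (powMonoidHom 3))).map (commutator G).subtype := by
    refine (commutator_eq_closure G).trans_le ((Subgroup.closure_le _).2 ?_)
    rintro _ ⟨x, y, rfl⟩
    exact ⟨⟨_, Subgroup.commutator_mem_commutator (Subgroup.mem_top x) (Subgroup.mem_top y)⟩,
      hG.commutatorElement_pow_three_mem_center x y, rfl⟩
  obtain ⟨d, hd, rfl⟩ := h hc
  exact hd

theorem commute_commutatorElement_cons_iff {x y z : G} (hxyz : ⁅x, ⁅y, z⁆⁆ ≠ 1) (i j : Fin 3) :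
    Commute (![⁅y, z⁆, ⁅x, z⁆, ⁅x, y⁆] i) (![x, y, z] j) ↔ i ≠ j := by
  have hxz : ⁅y, ⁅x, z⁆⁆ ≠ 1 := by
    rwa [Ne, hG.commutatorElement_commutatorElement_swap, inv_eq_one]
  have hxy : ⁅z, ⁅x, y⁆⁆ ≠ 1 := by
    rwa [Ne, hG.commutatorElement_commutatorElement_swap, inv_eq_one,
      ← commutatorElement_inv y, hG.commutatorElement_inv_right, inv_eq_one]
  have hl := hG.commute_commutatorElement_left
  have hr := hG.commute_commutatorElement_right
  rw [Ne, commutatorElement_eq_one_iff_commute, Commute.symm_iff] at hxyz hxz hxy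
  fin_cases i <;> fin_cases j <;> simp [*, Commute.symm]

open scoped IsMulCommutative in
theorem card_commutator_le_sq_card_center_subgroupOf [Finite G] [IsMulCommutative (commutator G)]
    (hΩ : ∀ u : G, u ^ 3 = 1 → u ∈ Subgroup.center G) :
    Nat.card (commutator G) ≤ Nat.card ((Subgroup.center G).subgroupOf (commutator G)) ^ 2 := by
  rw [sq]
  refine card_le_card_mul_card_of_ker_le_of_range_le (f := powMonoidHom 3) ?_ ?_
  · exact fun c hc ↦ hΩ _ (congrArg Subtype.val hc)
  · rintro _ ⟨c, rfl⟩
    exact hG.pow_three_mem_center_of_mem_commutator c.2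

theorem three_pow_nine_le_card [Finite G] (h3 : IsPGroup 3 G)
    (hΩ : ∀ u : G, u ^ 3 = 1 → u ∈ Subgroup.center G) {x y z : G} (hxyz : ⁅x, ⁅y, z⁆⁆ ≠ 1) :
    3 ^ 9 ≤ Nat.card G := by
  have := hG.isMulCommutative_commutator fun x y z ↦
    hΩ _ (hG.commutatorElement_commutatorElement_pow_three x y z)
  let e : Fin 3 → G := ![x, y, z]
  let d : Fin 3 → G := ![⁅y, z⁆, ⁅x, z⁆, ⁅x, y⁆]
  have hde : ∀ i j, Commute (d i) (e j) ↔ i ≠ j := hG.commute_commutatorElement_cons_iff hxyz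
  set D := commutator G
  let Z := Subgroup.center G
  have hdD (i) : d i ∈ D := by
    fin_cases i <;> exact Subgroup.commutator_mem_commutator trivial trivial
  have hGD : 3 ^ 3 * Nat.card D ≤ Nat.card G := by
    rw [← Subgroup.card_top (G := G)]
    refine (Nat.mul_le_mul_left _ (Subgroup.card_le_of_le ?_)).trans
      (pow_card_mul_card_inf_centralizer_le h3 Finset.univ e d (H := ⊤)
        (fun i ↦ Subgroup.mem_top _) fun i j ↦ by rw [Commute.symm_iff, hde, ne_comm])
    refine le_inf le_top (D.le_centralizer.trans (Subgroup.centralizer_le ?_))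
    rintro _ ⟨i, -, rfl⟩
    exact hdD i
  have hDZ : 3 ^ 3 * Nat.card (Z.subgroupOf D) ≤ Nat.card D := by
    rw [Nat.card_congr
      ((Z.subgroupOf D).equivMapOfInjective D.subtype D.subtype_injective).toEquiv]
    refine (Nat.mul_le_mul_left _ (Subgroup.card_le_of_le ?_)).trans
      (pow_card_mul_card_inf_centralizer_le h3 Finset.univ d e hdD hde)
    rw [Subgroup.subgroupOf_map_subtype, inf_comm]
    exact inf_le_inf_left _ (Subgroup.center_le_centralizer _)
  have hZ : 3 ^ 3 ≤ Nat.card (Z.subgroupOf D) := by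
    have hD := hG.card_commutator_le_sq_card_center_subgroupOf hΩ
    rw [sq] at hD
    exact Nat.le_of_mul_le_mul_right (hDZ.trans hD) Nat.card_pos
  calc 3 ^ 9 = 3 ^ 3 * (3 ^ 3 * 3 ^ 3) := by norm_num
    _ ≤ 3 ^ 3 * (3 ^ 3 * Nat.card (Z.subgroupOf D)) := by gcongr
    _ ≤ 3 ^ 3 * Nat.card D := by gcongr
    _ ≤ Nat.card G := hGD

end IsTwoEngel

theorem exists_exponent_abelianization_eq_pow_succ {G : Type*} [Group G] [Finite G] [Nontrivial G]
    {p : ℕ} [Fact p.Prime] (hG : IsPGroup p G) :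
    ∃ r, Monoid.exponent (Abelianization G) = p ^ (r + 1) := by
  have := hG.isNilpotent
  obtain ⟨n, hn⟩ := isPGroup_iff_exponent_eq_pow.1 (hG.to_quotient (commutator G))
  cases n with
  | succ r => exact ⟨r, hn⟩
  | zero =>
    have hsub : Subsingleton (G ⧸ commutator G) := Monoid.exp_eq_one_iff.1 (by simpa using hn)
    rw [QuotientGroup.subsingleton_iff] at hsub
    exact absurd hsub (Group.IsSolvable.commutator_lt_top_of_nontrivial G).ne

namespace IsEGroup

variable {G : Type*} [Group G] [Finite G] (hE : IsEGroup G) {p : ℕ} [Fact p.Prime]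
  (hG : IsPGroup p G)
include hE hG

theorem mem_center_of_pow_eq_one {u : G} (hu : u ^ p = 1) : u ∈ Subgroup.center G := by
  nontriviality G
  obtain ⟨r, hr⟩ := exists_exponent_abelianization_eq_pow_succ hG
  apply hE.mem_center_of_pow_exponent_abelianization_eq_one
  rw [hr, pow_succ', pow_mul, hu, one_pow]

theorem commutator_le_center_of_card_lt (hcard : Nat.card G < p ^ 9) :
    commutator G ≤ Subgroup.center G := by
  refine Subgroup.commutator_le.2 fun x _ y _ ↦ Subgroup.mem_center_iff.2 fun z ↦
    commutatorElement_eq_one_iff_mul_comm.1 ?_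
  by_cases hp : p = 3
  · subst hp
    by_contra hne
    exact hcard.not_ge (hE.isTwoEngel.three_pow_nine_le_card hG
      (fun u ↦ hE.mem_center_of_pow_eq_one hG) hne)
  · have hcop : p.Coprime 3 := (Nat.coprime_primes Fact.out Nat.prime_three).2 hp
    refine (hG.powEquiv hcop).injective ?_
    rw [hG.powEquiv_apply, hG.powEquiv_apply, one_pow,
      hE.isTwoEngel.commutatorElement_commutatorElement_pow_three]

end IsEGroup

theorem commutator_le_of_closure_eq_top {G : Type*} [Group G] {N : Subgroup G} [N.Normal]
    {s : Set G} (hs : Subgroup.closure s = ⊤) (h : ∀ x ∈ s, ∀ y ∈ s, ⁅x, y⁆ ∈ N) :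
    commutator G ≤ N := by
  rw [← Subgroup.Normal.quotient_commutative_iff_commutator_le]
  have hcomm := Subgroup.isMulCommutative_closure (k := QuotientGroup.mk' N '' s) (by
    rintro _ ⟨x, hx, rfl⟩ _ ⟨y, hy, rfl⟩
    rw [← commutatorElement_eq_one_iff_mul_comm, ← map_commutatorElement]
    exact (QuotientGroup.eq_one_iff _).2 (h x hx y hy))
  rw [← MonoidHom.map_closure, hs,
    Subgroup.map_top_of_surjective _ (QuotientGroup.mk'_surjective N)] at hcomm
  exact ⟨⟨fun a b ↦ setLike_mul_comm (Subgroup.mem_top a) (Subgroup.mem_top b)⟩⟩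

section ClassTwo

variable {G : Type*} [Group G] (hZ : commutator G ≤ Subgroup.center G)
include hZ

theorem commute_commutatorElement_of_commutator_le_center (x y z : G) : Commute z ⁅x, y⁆ :=
  Subgroup.mem_center_iff.1
    (hZ (Subgroup.commutator_mem_commutator (Subgroup.mem_top x) (Subgroup.mem_top y))) z

theorem commutatorElement_mul_left_of_commutator_le_center (x y z : G) :
    ⁅x * y, z⁆ = ⁅x, z⁆ * ⁅y, z⁆ := by
  have h := commute_commutatorElement_of_commutator_le_center hZ
  rw [commutatorElement_mul_left_eq_conj_mul, (h y z x).eq, mul_inv_cancel_right,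
    (h x z ⁅y, z⁆).eq]

theorem commutatorElement_mul_right_of_commutator_le_center (x y z : G) :
    ⁅x, y * z⁆ = ⁅x, y⁆ * ⁅x, z⁆ := by
  have h := commute_commutatorElement_of_commutator_le_center hZ
  rw [commutatorElement_mul_right_eq_mul_conj, mul_assoc _ y, (h x z y).eq, ← mul_assoc,
    mul_inv_cancel_right]

theorem commutatorElement_pow_left_of_commutator_le_center (x y : G) (n : ℕ) :
    ⁅x ^ n, y⁆ = ⁅x, y⁆ ^ n := by
  have h := commute_commutatorElement_of_commutator_le_center hZ
  rw [← commutatorElement_inv, commutatorElement_pow_right_of_commute (h y x x), ← inv_pow,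
    commutatorElement_inv]

theorem mul_pow_of_commutator_le_center (x y : G) (n : ℕ) :
    (x * y) ^ n = x ^ n * y ^ n * ⁅y, x⁆ ^ n.choose 2 := by
  have hcomm (z : G) (m : ℕ) : Commute (⁅y, x⁆ ^ m) z :=
    ((commute_commutatorElement_of_commutator_le_center hZ y x z).pow_right m).symm
  induction n with
  | zero => simp
  | succ n ih =>
    have hyx : y ^ n * x = x * y ^ n * ⁅y, x⁆ ^ n := by
      rw [← (hcomm _ n).eq, ← commutatorElement_pow_left_of_commutator_le_center hZ,
        commutatorElement_def, ← mul_assoc, inv_mul_cancel_right, inv_mul_cancel_right]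
    calc (x * y) ^ (n + 1) = x ^ n * y ^ n * ⁅y, x⁆ ^ n.choose 2 * (x * y) := by rw [pow_succ, ih]
      _ = x ^ n * (y ^ n * x) * y * ⁅y, x⁆ ^ n.choose 2 := by
        rw [mul_assoc, (hcomm _ _).eq]; simp only [mul_assoc]
      _ = x ^ n * x * y ^ n * (⁅y, x⁆ ^ n * y) * ⁅y, x⁆ ^ n.choose 2 := by
        rw [hyx]; simp only [mul_assoc]
      _ = x ^ (n + 1) * y ^ (n + 1) * ⁅y, x⁆ ^ (n + 1).choose 2 := by
        rw [(hcomm y n).eq, Nat.choose_succ_succ' n 1, Nat.choose_one_right, pow_add ⁅y, x⁆,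
          pow_succ x n, pow_succ y n]
        simp only [mul_assoc]

theorem pow_eq_one_of_mem_commutator {n : ℕ} (hpow : ∀ x : G, x ^ n ∈ Subgroup.center G) {c : G}
    (hc : c ∈ commutator G) : c ^ n = 1 := by
  rw [commutator_eq_closure] at hc
  induction hc using Subgroup.closure_induction with
  | mem c hc =>
    obtain ⟨x, y, rfl⟩ := hc
    rw [← commutatorElement_pow_left_of_commutator_le_center hZ,
      commutatorElement_eq_one_iff_mul_comm, Subgroup.mem_center_iff.1 (hpow x)]
  | one => exact one_pow n
  | mul c d hc _ ihc ihd =>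
    rw [← commutator_eq_closure] at hc
    rw [Commute.mul_pow (Subgroup.mem_center_iff.1 (hZ hc) d).symm, ihc, ihd, one_mul]
  | inv c _ ih => rw [inv_pow, ih, inv_one]

theorem exists_monoidHom_apply_eq_pow_of_odd {n : ℕ} (hn : Odd n)
    (hpow : ∀ x : G, x ^ n ∈ Subgroup.center G) : ∃ f : G →* G, ∀ x, f x = x ^ n := by
  refine ⟨MonoidHom.mk' (· ^ n) fun x y ↦ ?_, fun x ↦ rfl⟩
  have hcomm : ⁅y, x⁆ ^ n = 1 := pow_eq_one_of_mem_commutator hZ hpow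
    (Subgroup.commutator_mem_commutator (Subgroup.mem_top y) (Subgroup.mem_top x))
  obtain ⟨k, hk⟩ : n ∣ n.choose 2 := by
    obtain ⟨k, rfl⟩ := hn
    exact ⟨k, by rw [Nat.choose_two_right, add_tsub_cancel_right, mul_left_comm,
      Nat.mul_div_cancel_left _ two_pos]⟩
  rw [mul_pow_of_commutator_le_center hZ, hk, pow_mul, hcomm, one_pow, mul_one]

theorem isCyclic_commutator_of_closure_pair_eq_top {a b : G ⧸ Subgroup.center G}
    (hab : Subgroup.closure {a, b} = ⊤) : IsCyclic (commutator G) := by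
  obtain ⟨x, rfl⟩ := QuotientGroup.mk_surjective a
  obtain ⟨y, rfl⟩ := QuotientGroup.mk_surjective b
  set N := Subgroup.zpowers ⁅x, y⁆
  have hNZ : N ≤ Subgroup.center G := Subgroup.zpowers_le.2
    (hZ (Subgroup.commutator_mem_commutator (Subgroup.mem_top x) (Subgroup.mem_top y)))
  have : N.Normal := ⟨fun n hn g ↦ by
    rwa [Subgroup.mem_center_iff.1 (hNZ hn) g, mul_inv_cancel_right]⟩
  have hgen : Subgroup.closure ({x, y} ∪ Subgroup.center G : Set G) = ⊤ := by
    rw [Subgroup.closure_union, Subgroup.closure_eq,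
      ← QuotientGroup.ker_mk' (Subgroup.center G), ← Subgroup.comap_map_eq, MonoidHom.map_closure,
      Set.image_pair, QuotientGroup.coe_mk', hab, Subgroup.comap_top]
  have hle : commutator G ≤ N := by
    refine commutator_le_of_closure_eq_top hgen ?_
    have hxy : ⁅x, y⁆ ∈ N := Subgroup.mem_zpowers _
    have hyx : ⁅y, x⁆ ∈ N := commutatorElement_inv x y ▸ inv_mem hxy
    have hright (z) (hz : z ∈ Subgroup.center G) (g : G) : ⁅g, z⁆ ∈ N :=
      commutatorElement_eq_one_iff_mul_comm.2 (Subgroup.mem_center_iff.1 hz g) ▸ one_mem N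
    have hleft (z) (hz : z ∈ Subgroup.center G) (g : G) : ⁅z, g⁆ ∈ N :=
      commutatorElement_inv g z ▸ inv_mem (hright z hz g)
    have hself (g : G) : ⁅g, g⁆ ∈ N := commutatorElement_self g ▸ one_mem N
    rintro u ((rfl | rfl) | hu) v ((rfl | rfl) | hv)
    exacts [hself _, hxy, hright v hv _, hyx, hself _, hright v hv _, hleft u hu _, hleft u hu _,
      hleft u hu _]
  exact isCyclic_of_injective (Subgroup.inclusion hle) (Subgroup.inclusion_injective hle)

end ClassTwo

section LinearAlgebra

open Matrix

section CommRing

variable {R : Type*} [CommRing R]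

theorem crossProduct_mulVec_mulVec (A : Matrix (Fin 3) (Fin 3) R) (x y : Fin 3 → R) :
    (A *ᵥ x) ⨯₃ (A *ᵥ y) = A.adjugateᵀ *ᵥ (x ⨯₃ y) := by
  ext i
  fin_cases i <;>
    simp [cross_apply, mulVec, dotProduct, Fin.sum_univ_three, adjugate_fin_three] <;> ring

theorem mul_eq_adjugate_transpose_mul {n : Type*} [Fintype n] [DecidableEq n] {M A : Matrix n n R}
    (hdet : A.det = 1) (hA : Aᵀ * M * A = M) : M * A = A.adjugateᵀ * M := by
  have hinv : A.adjugateᵀ * Aᵀ = 1 := by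
    rw [← transpose_mul, mul_adjugate, hdet, one_smul, transpose_one]
  calc M * A = A.adjugateᵀ * Aᵀ * (M * A) := by rw [hinv, one_mul]
    _ = A.adjugateᵀ * M := by rw [mul_assoc, ← mul_assoc Aᵀ, hA]

theorem exists_linearMap_apply_crossProduct {W : Type*} [AddCommGroup W] [Module R W]
    (B : (Fin 3 → R) →ₗ[R] (Fin 3 → R) →ₗ[R] W) (hB : B.IsAlt) :
    ∃ T : (Fin 3 → R) →ₗ[R] W, ∀ x y, T (x ⨯₃ y) = B x y := by
  let e : Fin 3 → Fin 3 → R := fun i ↦ Pi.single i 1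
  let T := Fintype.linearCombination R ![B (e 1) (e 2), B (e 2) (e 0), B (e 0) (e 1)]
  suffices h : (crossProduct (R := R)).compr₂ T = B from
    ⟨T, fun x y ↦ LinearMap.congr_fun₂ h x y⟩
  refine (Pi.basisFun R (Fin 3)).ext fun i ↦ (Pi.basisFun R (Fin 3)).ext fun j ↦ ?_
  fin_cases i <;> fin_cases j <;>
    simp [T, e, cross_apply, Fintype.linearCombination_apply, Fin.sum_univ_three,
      hB.self_eq_zero, hB.neg]

end CommRing

variable {F : Type*} [Field F]

theorem exists_crossProduct_mulVec_ne_zero {A : Matrix (Fin 3) (Fin 3) F}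
    (hA : ∀ c : F, A ≠ c • 1) : ∃ x, x ⨯₃ (A *ᵥ x) ≠ 0 := by
  by_contra! h
  obtain ⟨c, hc⟩ := LinearMap.exists_eq_smul_id_of_forall_notLinearIndependent
    (f := toLin' A) fun x hx ↦ crossProduct_ne_zero_iff_linearIndependent.2 hx (h x)
  refine hA c (toLin'.injective ?_)
  rw [map_smul, toLin'_one]
  exact hc

theorem exists_dotProduct_mulVec_self_ne_zero {n : Type*} [Fintype n]
    (h2 : (2 : F) ≠ 0) {M : Matrix n n F} (hM : M ≠ 0) (hsymm : M.IsSymm) :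
    ∃ v, v ⬝ᵥ M *ᵥ v ≠ 0 := by
  classical
  have := invertibleOfNonzero h2
  have hB : LinearMap.IsSymm (toBilin' M) := ⟨fun x y ↦ by
    rw [RingHom.id_apply, toBilin'_apply', toBilin'_apply', dotProduct_mulVec,
      ← mulVec_transpose, hsymm, dotProduct_comm]⟩
  obtain ⟨v, hv⟩ := LinearMap.BilinForm.exists_bilinForm_self_ne_zero
    (B := toBilin' M) (by simpa using hM) hB
  exact ⟨v, by rwa [toBilin'_apply'] at hv⟩

theorem exists_isometry_of_isSymm (h2 : (2 : F) ≠ 0) {M : Matrix (Fin 3) (Fin 3) F}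
    (hM : M ≠ 0) (hsymm : M.IsSymm) :
    ∃ A : Matrix (Fin 3) (Fin 3) F, A.det = 1 ∧ Aᵀ * M * A = M ∧ ∀ c : F, A ≠ c • 1 := by
  obtain ⟨v, hv⟩ := exists_dotProduct_mulVec_self_ne_zero h2 hM hsymm
  obtain ⟨w, hw⟩ : ∃ w, M *ᵥ v = w := ⟨_, rfl⟩
  have hvM : v ᵥ* M = w := by rw [← mulVec_transpose, hsymm, hw]
  rw [hw, dotProduct_comm] at hv
  obtain ⟨s, hs⟩ : ∃ s, s * (w ⬝ᵥ v) = 2 := ⟨2 / (w ⬝ᵥ v), div_mul_cancel₀ 2 hv⟩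
  -- the isometry fixing `v` and acting as `-1` on its orthogonal complement
  refine ⟨-1 + s • vecMulVec v w, ?_, ?_, fun c hc ↦ ?_⟩
  · rw [dotProduct, Fin.sum_univ_three] at hs
    simp only [det_fin_three, Matrix.add_apply, Matrix.neg_apply, one_apply_eq, Matrix.smul_apply,
      vecMulVec_apply, smul_eq_mul, ne_eq, Fin.reduceEq, not_false_eq_true, one_apply_ne, neg_zero,
      zero_add, zero_ne_one, one_ne_zero]
    linear_combination hs
  · simp only [transpose_add, transpose_neg, transpose_one, transpose_smul, transpose_vecMulVec,
      add_mul, mul_add, neg_mul, mul_neg, one_mul, mul_one, Matrix.smul_mul, Matrix.mul_smul,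
      vecMulVec_mul, mul_vecMulVec, hvM, hw, smul_mulVec, vecMulVec_mulVec, op_smul_eq_smul,
      smul_smul, hs, smul_vecMulVec]
    module
  · have hcv : c • v = (1 : F) • v := by
      calc c • v = (-1 + s • vecMulVec v w) *ᵥ v := by rw [hc, smul_mulVec, one_mulVec]
        _ = (-1 + s * (w ⬝ᵥ v)) • v := by
          rw [add_mulVec, neg_mulVec, one_mulVec, smul_mulVec, vecMulVec_mulVec, op_smul_eq_smul,
            smul_smul, add_smul, neg_one_smul]
        _ = (1 : F) • v := by rw [hs]; norm_num
    have hc1 : c = 1 := smul_left_injective F (by rintro rfl; simp at hv) hcv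
    have htr := congrArg trace hc
    rw [trace_add, trace_smul, trace_vecMulVec, dotProduct_comm, smul_eq_mul, hs, trace_neg, hc1,
      one_smul, trace_one, Fintype.card_fin] at htr
    exact h2 (mul_self_eq_zero.1 (by linear_combination -htr))

theorem exists_isometry_of_not_isSymm {M : Matrix (Fin 3) (Fin 3) F}
    (hM : IsUnit M.det) (hsymm : ¬ M.IsSymm) :
    ∃ A : Matrix (Fin 3) (Fin 3) F, A.det = 1 ∧ Aᵀ * M * A = M ∧ ∀ c : F, A ≠ c • 1 := by
  refine ⟨M⁻¹ * Mᵀ, ?_, ?_, fun c hc ↦ hsymm ?_⟩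
  · rw [det_mul, det_transpose, ← det_mul, nonsing_inv_mul _ hM, det_one]
  · rw [transpose_mul, transpose_transpose, transpose_nonsing_inv, mul_assoc,
      mul_nonsing_inv_cancel_left _ _ hM, mul_assoc, nonsing_inv_mul, mul_one]
    rwa [det_transpose]
  · have hMc : Mᵀ = c • M := by
      rw [← mul_nonsing_inv_cancel_left _ Mᵀ hM, hc, Matrix.mul_smul, mul_one]
    have hc3 : c ^ 3 = 1 := by
      have h := congrArg det hMc
      rw [det_transpose, det_smul, Fintype.card_fin] at h
      exact hM.mul_right_cancel (by rw [← h, one_mul])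
    have hc2 : c ^ 2 = 1 := by
      have h : c ^ 2 • M = (1 : F) • M := by
        rw [sq, mul_smul, ← hMc, ← transpose_smul, ← hMc, transpose_transpose, one_smul]
      exact smul_left_injective F (by rintro rfl; simp at hM) h
    have hc1 : c = 1 := by rwa [pow_succ, hc2, one_mul] at hc3
    rw [IsSymm, hMc, hc1, one_smul]

theorem exists_mul_eq_adjugate_transpose_mul (h2 : (2 : F) ≠ 0) {M : Matrix (Fin 3) (Fin 3) F}
    (hM : M.det ≠ 0) :
    ∃ A : Matrix (Fin 3) (Fin 3) F, M * A = A.adjugateᵀ * M ∧ ∃ x, x ⨯₃ (A *ᵥ x) ≠ 0 := by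
  obtain ⟨A, hdet, hA, hc⟩ :
      ∃ A : Matrix (Fin 3) (Fin 3) F, A.det = 1 ∧ Aᵀ * M * A = M ∧ ∀ c : F, A ≠ c • 1 := by
    by_cases hsymm : M.IsSymm
    · exact exists_isometry_of_isSymm h2 (by rintro rfl; simp at hM) hsymm
    · exact exists_isometry_of_not_isSymm (isUnit_iff_ne_zero.2 hM) hsymm
  exact ⟨A, mul_eq_adjugate_transpose_mul hdet hA, exists_crossProduct_mulVec_ne_zero hc⟩

end LinearAlgebra

section Coordinates

open Matrix Multiplicative

theorem nonempty_linearEquiv_of_natCard_eq_pow {V : Type*} {p n : ℕ} [Fact p.Prime]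
    [AddCommGroup V] [Module (ZMod p) V] (hcard : Nat.card V = p ^ n) :
    Nonempty (V ≃ₗ[ZMod p] (Fin n → ZMod p)) := by
  have : Finite V := Nat.finite_of_card_ne_zero (hcard ▸ NeZero.ne (p ^ n))
  refine FiniteDimensional.nonempty_linearEquiv_of_finrank_eq ?_
  rw [Module.finrank_fin_fun]
  refine Nat.pow_right_injective (Fact.out : p.Prime).two_le ?_
  simpa only [Nat.card_zmod, hcard] using
    (Module.natCard_eq_pow_finrank (K := ZMod p) (V := V)).symm

theorem nonempty_mulEquiv_multiplicative_of_pow_eq_one {A : Type*} {p n : ℕ} [Fact p.Prime]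
    [CommGroup A] (hpow : ∀ a : A, a ^ p = 1) (hcard : Nat.card A = p ^ n) :
    Nonempty (A ≃* Multiplicative (Fin n → ZMod p)) := by
  let : Module (ZMod p) (Additive A) := AddCommGroup.zmodModule hpow
  obtain ⟨e⟩ := nonempty_linearEquiv_of_natCard_eq_pow (V := Additive A) hcard
  exact ⟨AddEquiv.toMultiplicativeRight e.toAddEquiv⟩

open scoped IsMulCommutative in
theorem exists_surjective_monoidHom_ker_eq_of_index_eq_pow {G : Type*} [Group G] {p n : ℕ}
    [Fact p.Prime] {N : Subgroup G} (hcomm : commutator G ≤ N) (hpow : ∀ x : G, x ^ p ∈ N)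
    (hindex : N.index = p ^ n) :
    ∃ v : G →* Multiplicative (Fin n → ZMod p), Function.Surjective v ∧ v.ker = N := by
  have : N.Normal := .of_commutator_le G hcomm
  have := Subgroup.Normal.quotient_commutative_iff_commutator_le.2 hcomm
  obtain ⟨e⟩ := nonempty_mulEquiv_multiplicative_of_pow_eq_one (A := G ⧸ N)
    (QuotientGroup.mk_surjective.forall.2 fun x ↦ (QuotientGroup.eq_one_iff _).2 (hpow x)) hindex
  exact ⟨(e : G ⧸ N →* _).comp (QuotientGroup.mk' N),
    e.surjective.comp (QuotientGroup.mk'_surjective N), by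
      rw [MonoidHom.ker_mulEquiv_comp, QuotientGroup.ker_mk']⟩

theorem commutatorElement_eq_of_map_eq {G H : Type*} [Group G] [Group H] {v : G →* H}
    (hker : v.ker ≤ Subgroup.center G) {x x' y y' : G} (hx : v x = v x') (hy : v y = v y') :
    ⁅x, y⁆ = ⁅x', y'⁆ := by
  have hleft {x x' : G} (hx : v x = v x') (y : G) : ⁅x, y⁆ = ⁅x', y⁆ := by
    have hz : ⁅x'⁻¹ * x, y⁆ = 1 := commutatorElement_eq_one_iff_mul_comm.2
      (Subgroup.mem_center_iff.1 (hker (MonoidHom.mem_ker.2 (by simp [hx]))) y).symm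
    rw [← mul_inv_cancel_left x' x, commutatorElement_mul_left_eq_conj_mul, hz, mul_one,
      mul_inv_cancel, one_mul]
  rw [hleft hx, ← commutatorElement_inv, hleft hy, commutatorElement_inv]

theorem exists_addMonoidHom_apply_crossProduct {V : Type*} {p : ℕ} [AddCommGroup V]
    [Module (ZMod p) V] (B : (Fin 3 → ZMod p) →+ (Fin 3 → ZMod p) →+ V) (hB : ∀ u, B u u = 0) :
    ∃ T : (Fin 3 → ZMod p) →+ V, ∀ u w, T (u ⨯₃ w) = B u w := by
  let B' : (Fin 3 → ZMod p) →ₗ[ZMod p] (Fin 3 → ZMod p) →ₗ[ZMod p] V :=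
    LinearMap.mk₂ _ (fun u w ↦ B u w) (fun u u' w ↦ by rw [map_add, AddMonoidHom.add_apply])
      (fun a u w ↦ ZMod.map_smul (B.flip w) a u) (fun u w w' ↦ map_add (B u) w w')
      (fun a u w ↦ ZMod.map_smul (B u) a w)
  obtain ⟨T, hT⟩ := exists_linearMap_apply_crossProduct B' hB
  exact ⟨T.toAddMonoidHom, hT⟩

open scoped IsMulCommutative in
theorem exists_commutatorElement_eq_crossProduct {G : Type*} [Group G] {p : ℕ}
    {v : G →* Multiplicative (Fin 3 → ZMod p)} (hv : Function.Surjective v)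
    (hker : v.ker ≤ Subgroup.center G) :
    ∃ T : Multiplicative (Fin 3 → ZMod p) →* G,
      ∀ x y, ⁅x, y⁆ = T (ofAdd ((v x).toAdd ⨯₃ (v y).toAdd)) := by
  have hZ : commutator G ≤ Subgroup.center G := (Abelianization.commutator_subset_ker v).trans hker
  have := Subgroup.le_centralizer_iff_isMulCommutative.1
    (hZ.trans (Subgroup.center_le_centralizer (commutator G : Set G)))
  have hpow (x : G) : x ^ p ∈ Subgroup.center G := hker <| by
    rw [MonoidHom.mem_ker, map_pow]
    exact toAdd.injective <| funext fun i ↦ by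
      rw [toAdd_pow, Pi.smul_apply, nsmul_eq_mul, CharP.cast_eq_zero, zero_mul]; rfl
  let : Module (ZMod p) (Additive (commutator G)) := AddCommGroup.zmodModule fun c ↦
    Subtype.ext (pow_eq_one_of_mem_commutator hZ hpow c.toMul.2)
  obtain ⟨σ, hσ⟩ := hv.hasRightInverse
  let s (u : Fin 3 → ZMod p) : G := σ (ofAdd u)
  have hs (x : G) : v (s (v x).toAdd) = v x := hσ _
  have hsadd (u w) : v (s (u + w)) = v (s u * s w) := by simp only [s, map_mul, hσ _, ofAdd_add]
  let c (x y : G) : commutator G :=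
    ⟨⁅x, y⁆, Subgroup.commutator_mem_commutator (Subgroup.mem_top x) (Subgroup.mem_top y)⟩
  let B : (Fin 3 → ZMod p) →+ (Fin 3 → ZMod p) →+ Additive (commutator G) :=
    AddMonoidHom.mk' (fun u ↦ AddMonoidHom.mk' (fun w ↦ Additive.ofMul (c (s u) (s w)))
      fun w w' ↦ Subtype.ext <| (commutatorElement_eq_of_map_eq hker rfl (hsadd w w')).trans
        (commutatorElement_mul_right_of_commutator_le_center hZ _ _ _))
      fun u u' ↦ AddMonoidHom.ext fun w ↦ Subtype.ext <|
        (commutatorElement_eq_of_map_eq hker (hsadd u u') rfl).trans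
        (commutatorElement_mul_left_of_commutator_le_center hZ _ _ _)
  obtain ⟨T, hT⟩ := exists_addMonoidHom_apply_crossProduct B fun u ↦
    Subtype.ext (commutatorElement_self (s u))
  refine ⟨(commutator G).subtype.comp (AddMonoidHom.toMultiplicativeLeft T), fun x y ↦ ?_⟩
  calc ⁅x, y⁆ = ⁅s (v x).toAdd, s (v y).toAdd⁆ :=
      commutatorElement_eq_of_map_eq hker (hs x).symm (hs y).symm
    _ = _ := congrArg (fun a ↦ ((Additive.toMul a : commutator G) : G)) (hT _ _).symm

theorem exists_matrix_apply_eq_of_ker_eq {G H : Type*} [Group G] [Group H] {p n : ℕ} [Fact p.Prime]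
    {v : G →* Multiplicative (Fin n → ZMod p)} (hv : Function.Surjective v)
    {T : Multiplicative (Fin n → ZMod p) →* H} (hT : Function.Injective T) {f : G →* H}
    (hker : f.ker = v.ker) (hrange : f.range ≤ T.range) :
    ∃ M : Matrix (Fin n) (Fin n) (ZMod p), M.det ≠ 0 ∧
      ∀ x, f x = T (ofAdd (M *ᵥ (v x).toAdd)) := by
  let f' : G →* Multiplicative (Fin n → ZMod p) :=
    (MonoidHom.ofInjective hT).symm.toMonoidHom.comp (f.codRestrict T.range fun x ↦ hrange ⟨x, rfl⟩)
  have hf' (x) : T (f' x) = f x :=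
    congrArg Subtype.val ((MonoidHom.ofInjective hT).apply_symm_apply _)
  have hker' : f'.ker = v.ker := by
    ext x
    rw [← hker, MonoidHom.mem_ker, MonoidHom.mem_ker, ← hf', map_eq_one_iff T hT]
  let m := (v.liftOfSurjective hv) ⟨f', hker'.ge⟩
  have hm (x) : m (v x) = f' x := v.liftOfRightInverse_comp_apply _ _ _ x
  have hminj : Function.Injective m := (injective_iff_map_eq_one m).2 <| hv.forall.2 fun x hx ↦ by
    rwa [hm, ← MonoidHom.mem_ker, hker'] at hx
  let L := (AddMonoidHom.toMultiplicative.symm m).toZModLinearMap p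
  have hL : Function.Injective L.toMatrix'.mulVec := by
    rw [show L.toMatrix'.mulVec = L from funext L.toMatrix'_mulVec]
    exact hminj
  refine ⟨L.toMatrix', ?_, fun x ↦ ?_⟩
  · rw [← isUnit_iff_ne_zero, ← isUnit_iff_isUnit_det]
    exact mulVec_injective_iff_isUnit.1 hL
  · rw [← hf', ← hm, LinearMap.toMatrix'_mulVec]
    rfl

theorem exists_crossProduct_coordinates {G : Type*} [Group G] {p : ℕ} [Fact p.Prime]
    (hZ : commutator G ≤ Subgroup.center G) (hpow : ∀ x : G, x ^ p ∈ Subgroup.center G)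
    (hindex : (Subgroup.center G).index = p ^ 3) (hcard : p ^ 3 ≤ Nat.card (commutator G)) :
    ∃ (v : G →* Multiplicative (Fin 3 → ZMod p)) (T : Multiplicative (Fin 3 → ZMod p) →* G),
      Function.Surjective v ∧ v.ker = Subgroup.center G ∧ Function.Injective T ∧
        T.range = commutator G ∧ ∀ x y, ⁅x, y⁆ = T (ofAdd ((v x).toAdd ⨯₃ (v y).toAdd)) := by
  obtain ⟨v, hv, hker⟩ := exists_surjective_monoidHom_ker_eq_of_index_eq_pow hZ hpow hindex
  obtain ⟨T, hT⟩ := exists_commutatorElement_eq_crossProduct hv hker.le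
  obtain ⟨hinj, hrange⟩ := injective_and_range_eq_of_card_le (L := commutator G)
    (Subgroup.commutator_le.2 fun x _ y _ ↦ ⟨_, (hT x y).symm⟩)
    (by simpa using hcard)
  exact ⟨v, T, hv, hker, hinj, hrange, hT⟩

end Coordinates

section Splitting

variable {p : ℕ} [Fact p.Prime]

theorem complementedLattice_addSubgroup_of_zmodModule {V : Type*} [AddCommGroup V]
    [Module (ZMod p) V] : ComplementedLattice (AddSubgroup V) :=
  (AddSubgroup.toZModSubmodule p).symm.complementedLattice

theorem complementedLattice_subgroup_of_pow_eq_one {A : Type*} [CommGroup A]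
    (hpow : ∀ a : A, a ^ p = 1) : ComplementedLattice (Subgroup A) := by
  let : Module (ZMod p) (Additive A) := AddCommGroup.zmodModule hpow
  have := complementedLattice_addSubgroup_of_zmodModule (p := p) (V := Additive A)
  exact Subgroup.toAddSubgroup.symm.complementedLattice

open scoped IsMulCommutative in
theorem exists_monoidHom_rightInverse_of_disjoint_ker {D G : Type*} [Group D] [Group G]
    {f : D →* G} (hf : Function.Surjective f) {N : Subgroup D} (hN : Disjoint N f.ker)
    (hcomm : commutator D ≤ N) (hpow : ∀ d : D, d ^ p ∈ N) :
    ∃ s : G →* D, Function.RightInverse s f := by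
  have : N.Normal := .of_commutator_le D hcomm
  have := Subgroup.Normal.quotient_commutative_iff_commutator_le.2 hcomm
  have := complementedLattice_subgroup_of_pow_eq_one (A := D ⧸ N)
    (QuotientGroup.mk_surjective.forall.2 fun x ↦ (QuotientGroup.eq_one_iff _).2 (hpow x))
  obtain ⟨C, hC⟩ := exists_isCompl (f.ker.map (QuotientGroup.mk' N))
  let π := f.domRestrict (C.comap (QuotientGroup.mk' N))
  have hinj : Function.Injective π := (injective_iff_map_eq_one π).2 fun ⟨d, hdC⟩ hd ↦ by
    have hdN : d ∈ N := (QuotientGroup.eq_one_iff d).1 <|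
      Subgroup.disjoint_def.1 hC.disjoint (Subgroup.mem_map_of_mem _ hd) hdC
    exact Subtype.ext (Subgroup.disjoint_def.1 hN hdN hd)
  have hsurj : Function.Surjective π := hf.forall.2 fun d ↦ by
    obtain ⟨_, ⟨k, hk, rfl⟩, c, hc, hkc⟩ := Subgroup.mem_sup.1
      (hC.sup_eq_top ▸ Subgroup.mem_top (QuotientGroup.mk' N d))
    refine ⟨⟨k⁻¹ * d, ?_⟩, ?_⟩
    · rwa [Subgroup.mem_comap, map_mul, map_inv, ← hkc, inv_mul_cancel_left]
    · rw [MonoidHom.domRestrict_apply, map_mul, map_inv, hk, inv_one, one_mul]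
  let e := MulEquiv.ofBijective π ⟨hinj, hsurj⟩
  exact ⟨(Subgroup.subtype _).comp e.symm.toMonoidHom, e.apply_symm_apply⟩

end Splitting

section CrossProductGroup

open Matrix Multiplicative

variable {G : Type*} [Group G] {p : ℕ} [Fact p.Prime] {v : G →* Multiplicative (Fin 3 → ZMod p)}
  {T : Multiplicative (Fin 3 → ZMod p) →* G} {M : Matrix (Fin 3) (Fin 3) (ZMod p)}

theorem exists_monoidHom_map_eq_mulVec (hv : Function.Surjective v) (hT : Function.Injective T)
    (hcomm : ∀ x y, ⁅x, y⁆ = T (ofAdd ((v x).toAdd ⨯₃ (v y).toAdd)))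
    (hpow : ∀ x, x ^ p = T (ofAdd (M *ᵥ (v x).toAdd))) {A : Matrix (Fin 3) (Fin 3) (ZMod p)}
    (hA : M * A = A.adjugateᵀ * M) :
    ∃ φ : G →* G, ∀ x, v (φ x) = ofAdd (A *ᵥ (v x).toAdd) := by
  let a := AddMonoidHom.toMultiplicative (toLin' A).toAddMonoidHom
  let a' := AddMonoidHom.toMultiplicative (toLin' A.adjugateᵀ).toAddMonoidHom
  let D : Subgroup (G × G) := (v.comp (.snd G G)).eqLocus ((a.comp v).comp (.fst G G))
  have hD (d : D) : (v d.1.2).toAdd = A *ᵥ (v d.1.1).toAdd := d.2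
  let Γ : Subgroup (G × G) := (T.prod (T.comp a')).range
  let f : D →* G := (MonoidHom.fst G G).comp D.subtype
  have hf : Function.Surjective f := fun x ↦
    (hv (a (v x))).elim fun y hy ↦ ⟨⟨(x, y), hy⟩, rfl⟩
  have hdisj : Disjoint (Γ.subgroupOf D) f.ker := by
    refine Subgroup.disjoint_def.2 fun {d} hd hker ↦ Subtype.ext ?_
    obtain ⟨u, hu⟩ := Subgroup.mem_subgroupOf.1 hd
    have hu1 : u = 1 := (map_eq_one_iff T hT).1 ((congrArg Prod.fst hu).trans hker)
    exact hu.symm.trans (hu1 ▸ map_one _)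
  have hcommΓ : commutator D ≤ Γ.subgroupOf D := by
    refine Subgroup.commutator_le.2 fun d _ d' _ ↦
      ⟨ofAdd ((v d.1.1).toAdd ⨯₃ (v d'.1.1).toAdd), Prod.ext (hcomm d.1.1 d'.1.1).symm ?_⟩
    refine Eq.trans ?_ (hcomm d.1.2 d'.1.2).symm
    rw [hD, hD, crossProduct_mulVec_mulVec]
    rfl
  have hpowΓ (d : D) : d ^ p ∈ Γ.subgroupOf D := by
    refine ⟨ofAdd (M *ᵥ (v d.1.1).toAdd), Prod.ext (hpow d.1.1).symm ?_⟩
    refine Eq.trans ?_ (hpow d.1.2).symm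
    rw [hD, mulVec_mulVec, hA, ← mulVec_mulVec]
    rfl
  obtain ⟨s, hs⟩ := exists_monoidHom_rightInverse_of_disjoint_ker hf hdisj hcommΓ hpowΓ
  refine ⟨(MonoidHom.snd G G).comp (D.subtype.comp s), fun x ↦ ?_⟩
  exact congrArg ofAdd ((hD (s x)).trans (congrArg (fun y ↦ A *ᵥ (v y).toAdd) (hs x)))

theorem exists_monoidHom_not_commute (hv : Function.Surjective v) (hT : Function.Injective T)
    (hcomm : ∀ x y, ⁅x, y⁆ = T (ofAdd ((v x).toAdd ⨯₃ (v y).toAdd)))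
    (hpow : ∀ x, x ^ p = T (ofAdd (M *ᵥ (v x).toAdd))) (hM : M.det ≠ 0) (hp : p ≠ 2) :
    ∃ φ : G →* G, ∃ x, ¬Commute x (φ x) := by
  obtain ⟨A, hA, u, hu⟩ := exists_mul_eq_adjugate_transpose_mul
    (Ring.two_ne_zero ((ZMod.ringChar_zmod_n p).trans_ne hp)) hM
  obtain ⟨φ, hφ⟩ := exists_monoidHom_map_eq_mulVec hv hT hcomm hpow hA
  obtain ⟨x, hx⟩ := hv (ofAdd u)
  refine ⟨φ, x, fun h ↦ hu ?_⟩
  rw [← commutatorElement_eq_one_iff_commute, hcomm, map_eq_one_iff T hT, hφ, hx] at h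
  exact h

end CrossProductGroup

section PowerEndomorphism

open Matrix Multiplicative

variable {G : Type*} [Group G]

theorem closure_pair_ne_top_of_ker_le_center (hZ : commutator G ≤ Subgroup.center G)
    (hne : Subgroup.center G ≠ ⊤) {f : G →* G} (hker : f.ker ≤ Subgroup.center G)
    (hrange : f.range ≤ commutator G) (a b : G ⧸ Subgroup.center G) :
    Subgroup.closure {a, b} ≠ ⊤ := by
  intro hab
  have := isCyclic_commutator_of_closure_pair_eq_top hZ hab
  have := (f.codRestrict (commutator G)
    fun x ↦ hrange ⟨x, rfl⟩).isMulCommutative_of_isCyclic_of_ker_le_center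
      (by rwa [MonoidHom.ker_codRestrict])
  exact hne (Subgroup.center_eq_top_iff.2 this)

open scoped IsMulCommutative in
theorem sq_card_commutator_le_card_center [Finite G] {m n : ℕ}
    (hZ : commutator G ≤ Subgroup.center G) (hm : ∀ x : G, x ^ m ∈ Subgroup.center G) (hmn : m ∣ n)
    (hroot : ∀ c ∈ commutator G, ∃ x : G, x ^ (m * n) = c) :
    Nat.card (commutator G) ^ 2 ≤ Nat.card (Subgroup.center G) := by
  let C := (commutator G).subgroupOf (Subgroup.center G)
  have hC : Nat.card C = Nat.card (commutator G) :=
    Nat.card_congr (Subgroup.subgroupOfEquivOfLe hZ).toEquiv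
  rw [← hC, sq]
  refine card_mul_card_le_card_of_le_ker_of_le_range
    (f := (powMonoidHom n : Subgroup.center G →* _)) (fun c hc ↦ ?_) fun c hc ↦ ?_
  · obtain ⟨k, rfl⟩ := hmn
    exact Subtype.ext ((pow_mul _ m k).trans
      ((pow_eq_one_of_mem_commutator hZ hm hc).symm ▸ one_pow k))
  · obtain ⟨x, hx⟩ := hroot c hc
    exact ⟨⟨x ^ m, hm x⟩, Subtype.ext ((pow_mul x m n).symm.trans hx)⟩

variable [Finite G] {p : ℕ} [Fact p.Prime] (hG : IsPGroup p G)
include hG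

theorem index_center_le_pow_three (hcard : Nat.card G ≤ p ^ 7) {f : G →* G}
    (hker : f.ker ≤ Subgroup.center G) (hrange : f.range ≤ Subgroup.center G) :
    (Subgroup.center G).index ≤ p ^ 3 := by
  obtain ⟨k, hk⟩ := hG.index (Subgroup.center G)
  have hp := (Fact.out : p.Prime).one_lt
  have hle := card_le_card_mul_card_of_ker_le_of_range_le hker hrange
  rw [← (Subgroup.center G).card_mul_index] at hle hcard
  have hsq : p ^ (k + k) ≤ p ^ 7 := by
    rw [pow_add, ← hk]
    exact (Nat.mul_le_mul_right _ (Nat.le_of_mul_le_mul_left hle Nat.card_pos)).trans hcard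
  rw [hk]
  exact Nat.pow_le_pow_right hp.le (by have := (Nat.pow_le_pow_iff_right hp).1 hsq; omega)

theorem index_center_eq_pow_three_and_pow_mem_center (hcard : Nat.card G ≤ p ^ 7)
    (hZ : commutator G ≤ Subgroup.center G) (hne : Subgroup.center G ≠ ⊤) {f : G →* G}
    (hker : f.ker ≤ Subgroup.center G) (hrange : f.range ≤ commutator G) :
    (Subgroup.center G).index = p ^ 3 ∧ ∀ x : G, x ^ p ∈ Subgroup.center G := by
  obtain ⟨hindex, hpow⟩ := card_eq_pow_three_and_pow_eq_one_of_closure_pair_ne_top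
    (hG.to_quotient (Subgroup.center G))
    (closure_pair_ne_top_of_ker_le_center hZ hne hker hrange)
    (index_center_le_pow_three hG hcard hker (hrange.trans hZ))
  exact ⟨hindex, fun x ↦ (QuotientGroup.eq_one_iff _).1 (hpow x)⟩

theorem exists_crossProduct_coordinates_of_card_le (hodd : Odd p) (hcard : Nat.card G ≤ p ^ 7)
    (hZ : commutator G ≤ Subgroup.center G) (hne : Subgroup.center G ≠ ⊤) {r : ℕ}
    (hpow : ∀ x : G, x ^ p ^ (r + 1) ∈ commutator G)
    (htor : ∀ x : G, x ^ p ^ (r + 1) = 1 → x ∈ Subgroup.center G) :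
    ∃ (v : G →* Multiplicative (Fin 3 → ZMod p)) (T : Multiplicative (Fin 3 → ZMod p) →* G)
      (M : Matrix (Fin 3) (Fin 3) (ZMod p)), Function.Surjective v ∧ Function.Injective T ∧
        (∀ x y, ⁅x, y⁆ = T (ofAdd ((v x).toAdd ⨯₃ (v y).toAdd))) ∧
        (∀ x, x ^ p = T (ofAdd (M *ᵥ (v x).toAdd))) ∧ M.det ≠ 0 := by
  obtain ⟨f, hf⟩ := exists_monoidHom_apply_eq_pow_of_odd hZ hodd.pow fun x ↦ hZ (hpow x)
  have hker : f.ker ≤ Subgroup.center G := fun x hx ↦ htor x ((hf x).symm.trans hx)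
  have hrange : f.range ≤ commutator G := by
    rintro _ ⟨x, rfl⟩
    exact hf x ▸ hpow x
  obtain ⟨hindex, hpZ⟩ :=
    index_center_eq_pow_three_and_pow_mem_center hG hcard hZ hne hker hrange
  have hGcard : Nat.card (Subgroup.center G) * p ^ 3 = Nat.card G :=
    hindex ▸ (Subgroup.center G).card_mul_index
  obtain ⟨v, T, hv, hvker, hT, hTrange, hcomm⟩ := exists_crossProduct_coordinates hZ hpZ hindex <|
    Nat.le_of_mul_le_mul_left (hGcard.trans_le
      (card_le_card_mul_card_of_ker_le_of_range_le hker hrange)) Nat.card_pos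
  have hcommcard : Nat.card (commutator G) = p ^ 3 := by
    rw [← hTrange, ← Nat.card_congr (MonoidHom.ofInjective hT).toEquiv]
    simp
  obtain ⟨hfker, hfrange⟩ := ker_eq_and_range_eq_of_card_mul_card_le_card hker hrange
    (hcommcard ▸ hGcard.le)
  obtain rfl : r = 0 := by
    by_contra hr
    have hZcard := sq_card_commutator_le_card_center (n := p ^ r) hZ hpZ (dvd_pow_self p hr)
      fun c hc ↦ (hfrange ▸ hc : c ∈ f.range).imp fun x hx ↦ by rw [← pow_succ', ← hf, hx]
    have hlt : p ^ 7 < p ^ 9 := Nat.pow_lt_pow_right (Fact.out : p.Prime).one_lt (by norm_num)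
    rw [hcommcard, ← pow_mul] at hZcard
    refine hlt.not_ge (le_trans ?_ hcard)
    rw [← hGcard, pow_add p 6 3]
    exact Nat.mul_le_mul_right _ hZcard
  obtain ⟨M, hM, hfM⟩ := exists_matrix_apply_eq_of_ker_eq hv hT (hfker.trans hvker.symm)
    (hrange.trans hTrange.ge)
  exact ⟨v, T, M, hv, hT, hcomm, fun x ↦ by rw [← hfM, hf, zero_add, pow_one], hM⟩

end PowerEndomorphism

/-- For every odd prime `p`, every finite `p`-group that is an `E`-group and
has order at most `p ^ 7` is abelian. -/
theorem pEGroup_card_le_p_pow_seven_comm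
    (p : ℕ) (hp : p.Prime) (hodd : Odd p) {G : Type*} [Group G] [Finite G]
    (hpG : IsPGroup p G) (hE : IsEGroup G) (hcard : Nat.card G ≤ p ^ 7) :
    ∀ x y : G, x * y = y * x := by
  have : Fact p.Prime := ⟨hp⟩
  nontriviality G
  suffices hcenter : Subgroup.center G = ⊤ from
    fun x y ↦ (Subgroup.mem_center_iff.1 (hcenter ▸ Subgroup.mem_top x) y).symm
  by_contra hne
  have hZ : commutator G ≤ Subgroup.center G := hE.commutator_le_center_of_card_lt hpG
    (hcard.trans_lt (Nat.pow_lt_pow_right hp.one_lt (by norm_num)))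
  obtain ⟨r, hr⟩ := exists_exponent_abelianization_eq_pow_succ hpG
  have hpow (x : G) : x ^ p ^ (r + 1) ∈ commutator G :=
    hr ▸ (QuotientGroup.eq_one_iff _).1 (Monoid.pow_exponent_eq_one (Abelianization.of x))
  have htor (x : G) (hx : x ^ p ^ (r + 1) = 1) : x ∈ Subgroup.center G :=
    hE.mem_center_of_pow_exponent_abelianization_eq_one (hr ▸ hx)
  obtain ⟨v, T, M, hv, hT, hcomm, hpowM, hM⟩ :=
    exists_crossProduct_coordinates_of_card_le hpG hodd hcard hZ hne hpow htor
  obtain ⟨φ, x, hφ⟩ := exists_monoidHom_not_commute hv hT hcomm hpowM hM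
    (hodd.ne_two_of_dvd_nat dvd_rfl)
  exact hφ (hE φ x)
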